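/- Let (p, r, q, D) and (p', r', q', D') be two quadruples of integers with p, p' ≥ 0, r, q, D, r', q', D' ≥ 1, D and D' squarefree, p² + D r² = q², p'² + D' r'² = q'², gcd(p, q) = gcd(p', q') = 1, 2p ≤ q, and 2p' ≤ q'. If the lattices Ω_D(p,q) and Ω_{D'}(p',q') are similar, then (p, r, q, D) = (p', r', q', D'). -/

import Mathlib

/-- The standard inner product on the plane `ℝ × ℝ`. -/
def ip (v w : ℝ × ℝ) : ℝ := v.1 * w.1 + v.2 * w.2

/-- The planar lattice spanned by `v` and `w`. -/
def lat (v w : ℝ × ℝ) : Set (ℝ × ℝ) := {z | ∃ a b : ℤ, z = (a : ℝ) • v + (b : ℝ) • w}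

/-!
Up to the scaling factor, a similarity preserves the squared minimal norm and the Gram determinant
of a lattice. Since the given basis of `Ω_D(p,q)` consists of two shortest vectors, these are `q²`
and `q² · D r² = q⁴ (1 - (p/q)²)`. Hence the cosine `p/q ≥ 0` of the angle between the two vectors
is an invariant; in lowest terms it gives `p` and `q`, and the squarefree decomposition of
`D r² = q² - p²` gives `D` and `r`.
-/

theorem isUnit_of_mul_sq_eq_mul_sq {M : Type*} [CommMonoid M] [DecompositionMonoid M]
    {a b x y : M} (hb : Squarefree b) (hxy : IsRelPrime x y) (h : a * x ^ 2 = b * y ^ 2) :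
    IsUnit x := by
  have hdvd : x ^ 2 ∣ b * y ^ 2 := h ▸ dvd_mul_left (x ^ 2) a
  have hxb : x ^ 2 ∣ b := (hxy.pow (m := 2) (n := 2)).dvd_of_dvd_mul_right hdvd
  exact hb x (sq x ▸ hxb)

theorem associated_of_squarefree_mul_sq_eq {M : Type*} [CommMonoidWithZero M]
    [GCDMonoid M] {a b x y : M} (ha : Squarefree a) (hb : Squarefree b) (hx : x ≠ 0)
    (h : a * x ^ 2 = b * y ^ 2) : Associated a b ∧ Associated x y := by
  obtain ⟨x', y', hx', hy', hunit⟩ := extract_gcd x y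
  have hrel : IsRelPrime x' y' := gcd_isUnit_iff_isRelPrime.1 hunit
  have hg : gcd x y ≠ 0 := gcd_ne_zero_of_left hx
  have h' : a * x' ^ 2 = b * y' ^ 2 := by
    apply mul_left_cancel₀ (pow_ne_zero 2 hg)
    rw [mul_left_comm, ← mul_pow, ← hx', mul_left_comm, ← mul_pow, ← hy', h]
  have hux : IsUnit x' := isUnit_of_mul_sq_eq_mul_sq hb hrel h'
  have huy : IsUnit y' := isUnit_of_mul_sq_eq_mul_sq ha hrel.symm h'.symm
  constructor
  · exact (associated_mul_unit_right a _ (hux.pow 2)).trans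
      (h' ▸ associated_mul_unit_left b _ (huy.pow 2))
  · have hassoc : Associated (gcd x y * x') (gcd x y * y') :=
      (associated_mul_unit_left _ x' hux).trans (associated_mul_unit_right _ y' huy)
    rwa [← hx', ← hy'] at hassoc

section Lattice

variable {v w v' w' : ℝ × ℝ}

theorem ip_smul_smul (v w : ℝ × ℝ) (a b : ℝ) : ip (a • v) (b • w) = a * b * ip v w := by
  simp only [ip, Prod.smul_fst, Prod.smul_snd, smul_eq_mul]
  ring

theorem ip_smul_add_smul (v w : ℝ × ℝ) (a b c d : ℝ) :
    ip (a • v + b • w) (c • v + d • w) =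
      a * c * ip v v + (a * d + b * c) * ip v w + b * d * ip w w := by
  simp only [ip, Prod.fst_add, Prod.snd_add, Prod.smul_fst, Prod.smul_snd, smul_eq_mul]
  ring

theorem ip_self_pos (hv : v ≠ 0) : 0 < ip v v := by
  obtain h | h := not_and_or.1 (mt Prod.ext_iff.2 hv)
  · exact add_pos_of_pos_of_nonneg (mul_self_pos.2 h) (mul_self_nonneg _)
  · exact add_pos_of_nonneg_of_pos (mul_self_nonneg _) (mul_self_pos.2 h)

theorem left_mem_lat (v w : ℝ × ℝ) : v ∈ lat v w := ⟨1, 0, by simp⟩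

theorem right_mem_lat (v w : ℝ × ℝ) : w ∈ lat v w := ⟨0, 1, by simp⟩

theorem image_lat (f : (ℝ × ℝ) →ₗ[ℝ] (ℝ × ℝ)) (v w : ℝ × ℝ) :
    f '' lat v w = lat (f v) (f w) := by
  ext z
  constructor
  · rintro ⟨_, ⟨a, b, rfl⟩, rfl⟩
    exact ⟨a, b, by simp only [map_add, map_smul]⟩
  · rintro ⟨a, b, rfl⟩
    exact ⟨_, ⟨a, b, rfl⟩, by simp only [map_add, map_smul]⟩

/-- The Gram determinant of a pair of plane vectors, which for a basis of a lattice is the square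
of the covolume. -/
def gramDet (v w : ℝ × ℝ) : ℝ := ip v v * ip w w - ip v w ^ 2

theorem exists_gramDet_eq_sq_mul (hv' : v' ∈ lat v w) (hw' : w' ∈ lat v w) :
    ∃ n : ℤ, gramDet v' w' = (n : ℝ) ^ 2 * gramDet v w := by
  obtain ⟨a, b, rfl⟩ := hv'
  obtain ⟨c, d, rfl⟩ := hw'
  refine ⟨a * d - b * c, ?_⟩
  simp only [gramDet, ip_smul_add_smul]
  push_cast
  ring

theorem gramDet_eq_of_lat_eq (h : lat v w = lat v' w') : gramDet v w = gramDet v' w' := by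
  obtain ⟨m, hm⟩ := exists_gramDet_eq_sq_mul (h ▸ left_mem_lat v w) (h ▸ right_mem_lat v w)
  obtain ⟨n, hn⟩ := exists_gramDet_eq_sq_mul (h ▸ left_mem_lat v' w') (h ▸ right_mem_lat v' w')
  obtain hzero | hne := eq_or_ne (gramDet v' w') 0
  · rw [hm, hzero, mul_zero]
  have hmn : (n : ℝ) ^ 2 * m ^ 2 = 1 :=
    mul_right_cancel₀ hne (by rw [one_mul, mul_assoc, ← hm, ← hn])
  have hm_sq : m ^ 2 = 1 :=
    Int.eq_one_of_mul_eq_one_left (sq_nonneg m) (by exact_mod_cast hmn)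
  rw [hm, ← Int.cast_pow, hm_sq, Int.cast_one, one_mul]

/-- `(v, w)` is a Lagrange–Gauss reduced basis of `lat v w`; then `v` is a shortest nonzero lattice
vector. Linear independence is not a field: it follows from `v ≠ 0` and the two inequalities. -/
structure IsReducedBasis (v w : ℝ × ℝ) : Prop where
  ne_zero : v ≠ 0
  two_mul_abs_ip_le : 2 * |ip v w| ≤ ip v v
  ip_self_le : ip v v ≤ ip w w

theorem one_le_sq_sub_abs_mul_add_sq {a b : ℤ} (h : a ≠ 0 ∨ b ≠ 0) :
    1 ≤ a ^ 2 - |a * b| + b ^ 2 := by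
  have hpos : 0 < a ^ 2 + b ^ 2 := by
    obtain h | h := h <;> positivity
  have hamgm : 2 * |a * b| ≤ a ^ 2 + b ^ 2 := by
    rw [abs_mul, ← sq_abs a, ← sq_abs b, ← mul_assoc]
    exact two_mul_le_add_sq |a| |b|
  omega

namespace IsReducedBasis

theorem ip_self_le_of_mem (h : IsReducedBasis v w) {z : ℝ × ℝ} (hz : z ∈ lat v w)
    (hz0 : z ≠ 0) : ip v v ≤ ip z z := by
  obtain ⟨a, b, rfl⟩ := hz
  have hab : a ≠ 0 ∨ b ≠ 0 := by
    contrapose! hz0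
    simp [hz0]
  have hform : (1 : ℝ) ≤ a ^ 2 - |(a : ℝ) * b| + b ^ 2 := by
    exact_mod_cast one_le_sq_sub_abs_mul_add_sq hab
  have hcross : -(|(a : ℝ) * b| * ip v v) ≤ 2 * (a * b * ip v w) := by
    have hle := mul_le_mul_of_nonneg_left h.two_mul_abs_ip_le (abs_nonneg ((a : ℝ) * b))
    have habs := neg_abs_le ((a : ℝ) * b * ip v w)
    rw [abs_mul] at habs
    linarith
  calc ip v v ≤ (a ^ 2 - |(a : ℝ) * b| + b ^ 2) * ip v v :=
        le_mul_of_one_le_left (ip_self_pos h.ne_zero).le hform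
    _ ≤ a ^ 2 * ip v v + 2 * (a * b * ip v w) + b ^ 2 * ip w w := by
        linarith [mul_le_mul_of_nonneg_left h.ip_self_le (sq_nonneg (b : ℝ))]
    _ = ip ((a : ℝ) • v + (b : ℝ) • w) ((a : ℝ) • v + (b : ℝ) • w) := by
        rw [ip_smul_add_smul]
        ring

theorem ip_self_eq_of_lat_eq (h : IsReducedBasis v w) (h' : IsReducedBasis v' w')
    (hlat : lat v w = lat v' w') : ip v v = ip v' v' :=
  le_antisymm (h.ip_self_le_of_mem (hlat ▸ left_mem_lat v' w') h'.ne_zero)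
    (h'.ip_self_le_of_mem (hlat ▸ left_mem_lat v w) h.ne_zero)

theorem abs_ip_eq_of_lat_eq (h : IsReducedBasis v w) (h' : IsReducedBasis v' w')
    (heq : ip v v = ip w w) (heq' : ip v' v' = ip w' w') (hlat : lat v w = lat v' w') :
    |ip v w| = |ip v' w'| := by
  have hgram := gramDet_eq_of_lat_eq hlat
  rw [gramDet, gramDet, ← heq, ← heq', h.ip_self_eq_of_lat_eq h' hlat] at hgram
  exact (sq_eq_sq_iff_abs_eq_abs _ _).1 (sub_right_injective hgram)

theorem map (h : IsReducedBasis v w) {f : ℝ × ℝ → ℝ × ℝ} {c : ℝ} (hc : 0 < c)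
    (hf : ∀ x y, ip (f x) (f y) = c * ip x y) : IsReducedBasis (f v) (f w) where
  ne_zero hfv := by
    have hpos : 0 < ip (f v) (f v) := hf v v ▸ mul_pos hc (ip_self_pos h.ne_zero)
    simp [hfv, ip] at hpos
  two_mul_abs_ip_le := by
    rw [hf, hf, abs_mul, abs_of_pos hc, mul_left_comm]
    exact mul_le_mul_of_nonneg_left h.two_mul_abs_ip_le hc.le
  ip_self_le := by
    rw [hf, hf]
    exact mul_le_mul_of_nonneg_left h.ip_self_le hc.le

theorem abs_ip_mul_ip_self_eq_of_image_lat_eq (h : IsReducedBasis v w)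
    (h' : IsReducedBasis v' w') (heq : ip v v = ip w w) (heq' : ip v' v' = ip w' w')
    {f : (ℝ × ℝ) →ₗ[ℝ] (ℝ × ℝ)} {c : ℝ} (hc : 0 < c)
    (hf : ∀ x y, ip (f x) (f y) = c * ip x y) (hlat : f '' lat v w = lat v' w') :
    |ip v w| * ip v' v' = |ip v' w'| * ip v v := by
  rw [image_lat] at hlat
  have hnorm : c * ip v v = ip v' v' := hf v v ▸ (h.map hc hf).ip_self_eq_of_lat_eq h' hlat
  have hangle : c * |ip v w| = |ip v' w'| := by
    rw [← (h.map hc hf).abs_ip_eq_of_lat_eq h' (by rw [hf, hf, heq]) heq' hlat, hf, abs_mul,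
      abs_of_pos hc]
  rw [← hnorm, ← hangle]
  ring

end IsReducedBasis

end Lattice

theorem isReducedBasis_of_sq_le {p q s : ℝ} (hq : 0 < q) (hpq : 2 * |p| ≤ q)
    (h : q ^ 2 ≤ p ^ 2 + s ^ 2) : IsReducedBasis (q, 0) (p, s) where
  ne_zero h0 := hq.ne' (congrArg Prod.fst h0)
  two_mul_abs_ip_le := by
    simp only [ip, zero_mul, add_zero, abs_mul, abs_of_pos hq]
    rw [mul_left_comm]
    exact mul_le_mul_of_nonneg_left hpq hq.le
  ip_self_le := by
    simp only [ip]
    linarith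

theorem abs_div_eq_abs_div_of_image_lat_eq {p q s p' q' s' : ℝ} (hq : 0 < q) (hq' : 0 < q')
    (hpq : 2 * |p| ≤ q) (hpq' : 2 * |p'| ≤ q') (h : p ^ 2 + s ^ 2 = q ^ 2)
    (h' : p' ^ 2 + s' ^ 2 = q' ^ 2) {f : (ℝ × ℝ) →ₗ[ℝ] (ℝ × ℝ)} {c : ℝ} (hc : 0 < c)
    (hf : ∀ x y, ip (f x) (f y) = c * ip x y)
    (hlat : f '' lat (q, 0) (p, s) = lat (q', 0) (p', s')) : |p| / q = |p'| / q' := by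
  have hred := isReducedBasis_of_sq_le hq hpq h.ge
  have hred' := isReducedBasis_of_sq_le hq' hpq' h'.ge
  have hcos := hred.abs_ip_mul_ip_self_eq_of_image_lat_eq hred'
    (by simp only [ip]; linarith) (by simp only [ip]; linarith) hc hf hlat
  simp only [ip, zero_mul, add_zero, abs_mul, abs_of_pos hq, abs_of_pos hq'] at hcos
  rw [div_eq_div_iff hq.ne' hq'.ne']
  apply mul_left_cancel₀ (mul_pos hq hq').ne'
  linarith

theorem sq_add_sq_mul_sqrt {p q r D : ℤ} (hD : 0 ≤ D) (h : p ^ 2 + D * r ^ 2 = q ^ 2) :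
    (p : ℝ) ^ 2 + (r * √(D : ℝ)) ^ 2 = (q : ℝ) ^ 2 := by
  rw [mul_pow, Real.sq_sqrt (Int.cast_nonneg hD), mul_comm]
  exact_mod_cast h

/-- The uniqueness assertion of Proposition 1.1: if `Ω_D(p,q)` and
`Ω_{D'}(p',q')` are similar (via a positive scalar and a linear isometry of the
plane), then the parameter quadruples coincide. -/
theorem stmt9 (p r q D p' r' q' D' : ℤ)
    (hp : 0 ≤ p) (hr : 1 ≤ r) (hq : 1 ≤ q) (hD : 1 ≤ D) (hDsf : Squarefree D)
    (hp' : 0 ≤ p') (hr' : 1 ≤ r') (hq' : 1 ≤ q') (hD' : 1 ≤ D') (hDsf' : Squarefree D')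
    (heq : p ^ 2 + D * r ^ 2 = q ^ 2) (heq' : p' ^ 2 + D' * r' ^ 2 = q' ^ 2)
    (hgcd : Int.gcd p q = 1) (hgcd' : Int.gcd p' q' = 1)
    (hhalf : 2 * p ≤ q) (hhalf' : 2 * p' ≤ q')
    (hsim : ∃ (α : ℝ) (U : (ℝ × ℝ) →ₗ[ℝ] (ℝ × ℝ)), 0 < α ∧
      (∀ z₁ z₂ : ℝ × ℝ, ip (U z₁) (U z₂) = ip z₁ z₂) ∧
      lat ((q' : ℝ), 0) ((p' : ℝ), (r' : ℝ) * Real.sqrt (D' : ℝ))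
        = (fun z => α • U z) '' lat ((q : ℝ), 0) ((p : ℝ), (r : ℝ) * Real.sqrt (D : ℝ))) :
    p = p' ∧ r = r' ∧ q = q' ∧ D = D' := by
  obtain ⟨α, U, hα, hU, hlat⟩ := hsim
  have hscale (x y : ℝ × ℝ) : ip ((α • U) x) ((α • U) y) = α ^ 2 * ip x y := by
    rw [LinearMap.smul_apply, LinearMap.smul_apply, ip_smul_smul, hU, sq]
  rw [← abs_of_nonneg hp] at hhalf
  rw [← abs_of_nonneg hp'] at hhalf'
  have hcos : |(p : ℝ)| / q = |(p' : ℝ)| / q' :=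
    abs_div_eq_abs_div_of_image_lat_eq (by exact_mod_cast hq) (by exact_mod_cast hq')
      (by exact_mod_cast hhalf) (by exact_mod_cast hhalf') (sq_add_sq_mul_sqrt (by omega) heq)
      (sq_add_sq_mul_sqrt (by omega) heq') (pow_pos hα 2) hscale hlat.symm
  rw [abs_of_nonneg (Int.cast_nonneg hp), abs_of_nonneg (Int.cast_nonneg hp')] at hcos
  obtain ⟨rfl, rfl⟩ : p = p' ∧ q = q' :=
    Rat.div_int_inj hq hq' hgcd hgcd' (Rat.cast_injective (α := ℝ) (by exact_mod_cast hcos))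
  have hDr : D * r ^ 2 = D' * r' ^ 2 := by linarith
  obtain ⟨hDD', hrr'⟩ := associated_of_squarefree_mul_sq_eq hDsf hDsf' (by omega : r ≠ 0) hDr
  exact ⟨rfl, Int.eq_of_associated_of_nonneg hrr' (by omega) (by omega), rfl,
    Int.eq_of_associated_of_nonneg hDD' (by omega) (by omega)⟩
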